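/- Let n ≥ 1, t₁ ∈ ℝ, L₀ ∈ Matrix (Fin n) (Fin n) ℝ. Let h : ℝ → Matrix (Fin n) (Fin n) ℝ be differentiable with h(t) invertible for all t and h(t₁) = 1, and let J : ℝ → Matrix (Fin n) (Fin n) ℝ be differentiable with J(t₁) = L₀. Then the following are equivalent: (i) J(t) = h(t) * L₀ * h(t)⁻¹ for all t; (ii) J'(t) = [h'(t) * h(t)⁻¹, J(t)] for all t. -/

import Mathlib

open Matrix

attribute [local instance] Matrix.linftyOpNormedAddCommGroup Matrix.linftyOpNormedRing
  Matrix.linftyOpNormedAlgebra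

section NormedRing

variable {A : Type*} [NormedRing A] [HasSummableGeomSeries A] [NormedAlgebra ℝ A]

/-- The derivative of the pointwise inverse of a curve of units. -/
theorem HasDerivAt.ringInverse {h : ℝ → A} {h' : A} {t : ℝ} (hh : HasDerivAt h h' t)
    (hu : IsUnit (h t)) :
    HasDerivAt (fun s => Ring.inverse (h s))
      (-(Ring.inverse (h t) * h' * Ring.inverse (h t))) t := by
  obtain ⟨u, hu⟩ := hu
  have hinv := hasFDerivAt_ringInverse (𝕜 := ℝ) u
  rw [hu] at hinv
  have hcomp := hinv.comp_hasDerivAt t hh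
  rw [← hu, Ring.inverse_unit]
  simpa [Function.comp_def] using hcomp

/-- Conjugating a constant by a curve of units gives a solution of the Lax equation. -/
theorem HasDerivAt.conj_const {h : ℝ → A} {h' : A} {t : ℝ} (hh : HasDerivAt h h' t)
    (hu : IsUnit (h t)) (L : A) :
    HasDerivAt (fun s => h s * L * Ring.inverse (h s))
      (h' * Ring.inverse (h t) * (h t * L * Ring.inverse (h t)) -
        h t * L * Ring.inverse (h t) * (h' * Ring.inverse (h t))) t := by
  refine ((hh.mul_const L).mul (hh.ringInverse hu)).congr_deriv ?_
  have hcancel : Ring.inverse (h t) * (h t * (L * Ring.inverse (h t))) =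
      L * Ring.inverse (h t) := by
    rw [← mul_assoc, Ring.inverse_mul_cancel _ hu, one_mul]
  simp only [mul_assoc, mul_neg, hcancel, sub_eq_add_neg]

/-- Conjugating a solution of the Lax equation back gives a curve of vanishing derivative. -/
theorem HasDerivAt.inverse_conj_of_lax {h J : ℝ → A} {h' : A} {t : ℝ}
    (hh : HasDerivAt h h' t) (hu : IsUnit (h t))
    (hJ : HasDerivAt J
      (h' * Ring.inverse (h t) * J t - J t * (h' * Ring.inverse (h t))) t) :
    HasDerivAt (fun s => Ring.inverse (h s) * J s * h s) 0 t := by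
  refine (((hh.ringInverse hu).mul hJ).mul hh).congr_deriv ?_
  simp only [Pi.mul_apply, mul_assoc, mul_sub, sub_mul, add_mul, neg_mul, Ring.inverse_mul_cancel _ hu, mul_one]
  abel

/-- A differentiable curve is the conjugate of its value at `t₁` by a curve of units `h` with
`h t₁ = 1` if and only if it solves the Lax equation `J' = [h' h⁻¹, J]`. -/
theorem eq_conj_iff_deriv_eq_lax {h J : ℝ → A} (t₁ : ℝ) (hh : Differentiable ℝ h)
    (hu : ∀ t, IsUnit (h t)) (hh₁ : h t₁ = 1) (hJ : Differentiable ℝ J) :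
    (∀ t, J t = h t * J t₁ * Ring.inverse (h t)) ↔
      ∀ t, deriv J t = deriv h t * Ring.inverse (h t) * J t -
        J t * (deriv h t * Ring.inverse (h t)) := by
  constructor
  · intro hconj t
    have hderiv := (hh t).hasDerivAt.conj_const (hu t) (J t₁)
    rw [← hconj t] at hderiv
    exact (hderiv.congr_of_eventuallyEq (.of_forall hconj)).deriv
  · intro hlax t
    have hzero (s : ℝ) : HasDerivAt (fun s => Ring.inverse (h s) * J s * h s) 0 s :=
      (hh s).hasDerivAt.inverse_conj_of_lax (hu s) (hlax s ▸ (hJ s).hasDerivAt)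
    have hconst : Ring.inverse (h t) * J t * h t = J t₁ := by
      simpa [hh₁] using is_const_of_deriv_eq_zero
        (fun s => (hzero s).differentiableAt) (fun s => (hzero s).deriv) t t₁
    rw [← hconst]
    simp only [mul_assoc, Ring.mul_inverse_cancel _ (hu t), mul_one]
    rw [← mul_assoc, Ring.mul_inverse_cancel _ (hu t), one_mul]

end NormedRing

/-- The affine dipolar-magnetic-torque constraint `J(t) = h(t) L₀ h(t)⁻¹` (with
`h(t₁) = 1`, `J(t₁) = L₀`) is equivalent to the non-conservation-of-momentum equation
`J' = [h' h⁻¹, J]`. -/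
theorem dipolar_constraint_iff_torque {n : ℕ} (hn : 1 ≤ n) (t₁ : ℝ)
    (L₀ : Matrix (Fin n) (Fin n) ℝ)
    (h J : ℝ → Matrix (Fin n) (Fin n) ℝ)
    (hh : Differentiable ℝ h) (hinv : ∀ t, IsUnit (h t)) (hh₁ : h t₁ = 1)
    (hJ : Differentiable ℝ J) (hJ₁ : J t₁ = L₀) :
    (∀ t, J t = h t * L₀ * (h t)⁻¹) ↔
      (∀ t, deriv J t = (deriv h t * (h t)⁻¹) * J t - J t * (deriv h t * (h t)⁻¹)) := by
  subst hJ₁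
  have : CompleteSpace (Matrix (Fin n) (Fin n) ℝ) := FiniteDimensional.complete ℝ _
  simp only [Matrix.nonsing_inv_eq_ringInverse]
  exact eq_conj_iff_deriv_eq_lax t₁ hh hinv hh₁ hJ
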